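/- arXiv:0710.1635 — 6 statements merged into one kernel-verified Lean document; each statement's English description precedes it below -/
import Mathlib

section
/- Let u : [0,1] → ℝ be a twice continuously differentiable function such that u(0) = 0, u(t) > 0 for all t ∈ (0,1], and u''(t) + (π²/4)·u(t) ≥ 0 for all t ∈ [0,1]. Then u(t) ≤ u(1)·sin(t·π/2) for all t ∈ [0,1]. -/
/-!
The Wronskian `v u' - v' u` has derivative `v u'' - v'' u`. For `v = sin (ω t)` this equals
`(u'' + ω² u) v`, which is nonnegative as long as `v` is, so the Wronskian increases from its
initial value `- ω u(0) ≥ 0`. It is the numerator of `(u / v)'`; hence `u / v` is increasing where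
`v` is positive, and cross-multiplying gives an inequality that survives at the zeros of `v`.
-/

open Set Real

section Wronskian

variable {𝕜 𝔸 : Type*} [NontriviallyNormedField 𝕜] [NormedRing 𝔸] [NormedAlgebra 𝕜 𝔸]

/-- The Wronskian `f g' - f' g` of `f` and `g`, which measures the variation of `g / f`. The
derivatives `f'` and `g'` are arguments, so that one-sided derivatives can be used at endpoints. -/
def wronskian (f f' g g' : 𝕜 → 𝔸) (x : 𝕜) : 𝔸 :=
  f x * g' x - f' x * g x

theorem hasDerivWithinAt_wronskian {f f' g g' : 𝕜 → 𝔸} {f'' g'' : 𝔸} {s : Set 𝕜} {x : 𝕜}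
    (hf : HasDerivWithinAt f (f' x) s x) (hf' : HasDerivWithinAt f' f'' s x)
    (hg : HasDerivWithinAt g (g' x) s x) (hg' : HasDerivWithinAt g' g'' s x) :
    HasDerivWithinAt (wronskian f f' g g') (f x * g'' - f'' * g x) s x :=
  ((hf.fun_mul hg').fun_sub (hf'.fun_mul hg)).congr_deriv (by abel)

end Wronskian

section Comparison

variable {u u' u'' v v' v'' : ℝ → ℝ} {D : Set ℝ} {a b : ℝ}

theorem monotoneOn_wronskian_of_deriv2_mul_le (hD : Convex ℝ D)
    (hu : ∀ x ∈ D, HasDerivWithinAt u (u' x) D x) (hu' : ∀ x ∈ D, HasDerivWithinAt u' (u'' x) D x)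
    (hv : ∀ x ∈ D, HasDerivWithinAt v (v' x) D x) (hv' : ∀ x ∈ D, HasDerivWithinAt v' (v'' x) D x)
    (hle : ∀ x ∈ interior D, v'' x * u x ≤ v x * u'' x) :
    MonotoneOn (wronskian v v' u u') D := by
  have hW : ∀ x ∈ D, HasDerivWithinAt (wronskian v v' u u') (v x * u'' x - v'' x * u x) D x :=
    fun x hx => hasDerivWithinAt_wronskian (hv x hx) (hv' x hx) (hu x hx) (hu' x hx)
  exact monotoneOn_of_hasDerivWithinAt_nonneg hD (fun x hx => (hW x hx).continuousWithinAt)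
    (fun x hx => (hW x (interior_subset hx)).mono interior_subset)
    (fun x hx => sub_nonneg.2 (hle x hx))

theorem monotoneOn_div_of_wronskian_nonneg (hD : Convex ℝ D)
    (hu : ∀ x ∈ D, HasDerivWithinAt u (u' x) D x) (hv : ∀ x ∈ D, HasDerivWithinAt v (v' x) D x)
    (hv0 : ∀ x ∈ D, v x ≠ 0) (hW : ∀ x ∈ interior D, 0 ≤ wronskian v v' u u' x) :
    MonotoneOn (fun x => u x / v x) D := by
  have hquot : ∀ x ∈ D,
      HasDerivWithinAt (fun x => u x / v x) (wronskian v v' u u' x / v x ^ 2) D x := by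
    intro x hx
    refine ((hu x hx).fun_div (hv x hx) (hv0 x hx)).congr_deriv ?_
    rw [wronskian, mul_comm (v x), mul_comm (v' x)]
  exact monotoneOn_of_hasDerivWithinAt_nonneg hD (fun x hx => (hquot x hx).continuousWithinAt)
    (fun x hx => (hquot x (interior_subset hx)).mono interior_subset)
    (fun x hx => div_nonneg (hW x hx) (sq_nonneg _))

theorem mul_right_endpoint_le_of_wronskian_nonneg
    (hu : ∀ x ∈ Icc a b, HasDerivWithinAt u (u' x) (Icc a b) x)
    (hv : ∀ x ∈ Icc a b, HasDerivWithinAt v (v' x) (Icc a b) x)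
    (hpos : ∀ x ∈ Ioo a b, 0 < v x) (hW : ∀ x ∈ Ioo a b, 0 ≤ wronskian v v' u u' x) :
    ∀ x ∈ Icc a b, u x * v b ≤ u b * v x := by
  intro x hx
  rcases hx.2.eq_or_lt with rfl | hxb
  · exact le_rfl
  have hab : a < b := hx.1.trans_lt hxb
  have hcu : ContinuousOn u (Icc a b) := fun y hy => (hu y hy).continuousWithinAt
  have hcv : ContinuousOn v (Icc a b) := fun y hy => (hv y hy).continuousWithinAt
  have hmono : MonotoneOn (fun y => u y / v y) (Ioo a b) :=
    monotoneOn_div_of_wronskian_nonneg (convex_Ioo a b)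
      (fun y hy => (hu y (Ioo_subset_Icc_self hy)).mono Ioo_subset_Icc_self)
      (fun y hy => (hv y (Ioo_subset_Icc_self hy)).mono Ioo_subset_Icc_self)
      (fun y hy => (hpos y hy).ne') (fun y hy => hW y (interior_subset hy))
  have hinterior : ∀ y ∈ Ioo a b, ∀ z ∈ Ioo y b, u y * v z ≤ u z * v y := by
    intro y hy z hz
    have hz' : z ∈ Ioo a b := ⟨hy.1.trans hz.1, hz.2⟩
    exact (div_le_div_iff₀ (hpos y hy) (hpos z hz')).1 (hmono hy hz' hz.1.le)
  have hright : ∀ y ∈ Ioo a b, u y * v b ≤ u b * v y := by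
    intro y hy
    have hsub : Icc y b ⊆ Icc a b := Icc_subset_Icc_left hy.1.le
    rw [← closure_Ioo hy.2.ne] at hsub
    exact le_on_closure (hinterior y hy) ((hcv.mono hsub).const_mul (u y))
      ((hcu.mono hsub).mul_const (v y)) (closure_Ioo hy.2.ne ▸ right_mem_Icc.2 hy.2.le)
  rw [← closure_Ioo hab.ne] at hcu hcv hx
  exact le_on_closure hright (hcu.mul_const (v b)) (hcv.const_mul (u b)) hx

theorem mul_right_endpoint_le_of_deriv2_mul_le
    (hu : ∀ x ∈ Icc a b, HasDerivWithinAt u (u' x) (Icc a b) x)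
    (hu' : ∀ x ∈ Icc a b, HasDerivWithinAt u' (u'' x) (Icc a b) x)
    (hv : ∀ x ∈ Icc a b, HasDerivWithinAt v (v' x) (Icc a b) x)
    (hv' : ∀ x ∈ Icc a b, HasDerivWithinAt v' (v'' x) (Icc a b) x)
    (hpos : ∀ x ∈ Ioo a b, 0 < v x) (hWa : 0 ≤ wronskian v v' u u' a)
    (hle : ∀ x ∈ Ioo a b, v'' x * u x ≤ v x * u'' x) :
    ∀ x ∈ Icc a b, u x * v b ≤ u b * v x := by
  have hmono : MonotoneOn (wronskian v v' u u') (Icc a b) :=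
    monotoneOn_wronskian_of_deriv2_mul_le (convex_Icc a b) hu hu' hv hv' (by rwa [interior_Icc])
  refine mul_right_endpoint_le_of_wronskian_nonneg hu hv hpos fun x hx => ?_
  exact hWa.trans
    (hmono (left_mem_Icc.2 (hx.1.trans hx.2).le) (Ioo_subset_Icc_self hx) hx.1.le)

theorem hasDerivAt_sin_mul_const (ω t : ℝ) :
    HasDerivAt (fun t => sin (t * ω)) (cos (t * ω) * ω) t :=
  (hasDerivAt_mul_const ω).sin

theorem hasDerivAt_cos_mul_const_mul_const (ω t : ℝ) :
    HasDerivAt (fun t => cos (t * ω) * ω) (-ω ^ 2 * sin (t * ω)) t :=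
  ((hasDerivAt_mul_const ω).cos.mul_const ω).congr_deriv (by ring)

theorem sturm_comparison_general {ω : ℝ} (hω : 0 < ω) (hb : b * ω ≤ π)
    (hu : ∀ t ∈ Icc 0 b, HasDerivWithinAt u (u' t) (Icc 0 b) t)
    (hu' : ∀ t ∈ Icc 0 b, HasDerivWithinAt u' (u'' t) (Icc 0 b) t)
    (h0 : u 0 ≤ 0) (hineq : ∀ t ∈ Ioo 0 b, 0 ≤ u'' t + ω ^ 2 * u t) :
    ∀ t ∈ Icc 0 b, u t * sin (b * ω) ≤ u b * sin (t * ω) := by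
  have hpos : ∀ t ∈ Ioo 0 b, 0 < sin (t * ω) := fun t ht =>
    sin_pos_of_pos_of_lt_pi (mul_pos ht.1 hω) ((mul_lt_mul_of_pos_right ht.2 hω).trans_le hb)
  refine mul_right_endpoint_le_of_deriv2_mul_le hu hu'
    (fun t _ => (hasDerivAt_sin_mul_const ω t).hasDerivWithinAt)
    (fun t _ => (hasDerivAt_cos_mul_const_mul_const ω t).hasDerivWithinAt) hpos ?_ ?_
  · simpa [wronskian] using mul_nonpos_of_nonneg_of_nonpos hω.le h0
  · intro t ht
    linear_combination mul_nonneg (hpos t ht).le (hineq t ht)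

end Comparison

/-- **Sturm-type comparison lemma.** Let `u : [0,1] → ℝ` be twice continuously
differentiable with `u 0 = 0`, `u t > 0` for `t ∈ (0,1]`, and
`u'' t + (π²/4) · u t ≥ 0` on `[0,1]`. Then `u t ≤ u 1 · sin (t·π/2)` for all
`t ∈ [0,1]`. -/
theorem sturm_comparison
    (u u' u'' : ℝ → ℝ)
    (hu' : ∀ t ∈ Set.Icc (0 : ℝ) 1, HasDerivWithinAt u (u' t) (Set.Icc (0 : ℝ) 1) t)
    (hu'' : ∀ t ∈ Set.Icc (0 : ℝ) 1, HasDerivWithinAt u' (u'' t) (Set.Icc (0 : ℝ) 1) t)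
    (hcont : ContinuousOn u'' (Set.Icc (0 : ℝ) 1))
    (h0 : u 0 = 0)
    (hpos : ∀ t ∈ Set.Ioc (0 : ℝ) 1, 0 < u t)
    (hineq : ∀ t ∈ Set.Icc (0 : ℝ) 1, 0 ≤ u'' t + (Real.pi ^ 2 / 4) * u t) :
    ∀ t ∈ Set.Icc (0 : ℝ) 1, u t ≤ u 1 * Real.sin (t * (Real.pi / 2)) := by
  have hineq' : ∀ t ∈ Ioo (0 : ℝ) 1, 0 ≤ u'' t + (π / 2) ^ 2 * u t := fun t ht =>
    (hineq t (Ioo_subset_Icc_self ht)).trans_eq (by ring)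
  simpa using sturm_comparison_general pi_div_two_pos (by linarith [pi_pos]) hu' hu'' h0.le hineq'
end

section
/- For every m ∈ ℕ there exist families R₀, …, R_{m−1}, where each R_j is a set of bounded open intervals of ℝ, such that: (i) each R_j covers ℝ, i.e. ⋃ R_j = ℝ; (ii) each R_j has multiplicity at most 2, i.e. every real number belongs to at most 2 members of R_j; and (iii) for all i ≠ j the disjoint union R_i ⊔ R_j has multiplicity at most 3, i.e. for every r ∈ ℝ the number of members of R_i containing r plus the number of members of R_j containing r is at most 3. -/
/-!
Let successive intervals of a cover overlap exactly in the unit intervals `(n, n + 1)`, where `n`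
runs through the integers congruent to `a` modulo `p`. Then a point `x` lies in two members of the
cover only if `⌊x⌋ ≡ a [ZMOD p]`, and in one member otherwise. Covers attached to disjoint
residue classes are therefore never doubled at the same point. The integers `n` of 2-adic valuation
`i` form the residue class of `2 ^ i` modulo `2 ^ (i + 1)`, and these classes are pairwise disjoint,
so there is even an infinite sequence of such covers.
-/

/-- The `k`-th interval of the cover attached to the residue class of `a` modulo `p`. It runs one
unit past the left endpoint `a + p * (k + 1)` of its successor. -/
def residueIoo (α : Type*) [Ring α] [LinearOrder α] (a p k : ℤ) : Set α :=
  Set.Ioo ((a + p * k : ℤ) : α) ((a + p * (k + 1) + 1 : ℤ) : α)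

/-- The cover by open intervals attached to the residue class of `a` modulo `p`, whose consecutive
members overlap in the intervals `(n, n + 1)` with `n ≡ a [ZMOD p]`. -/
def residueCover (α : Type*) [Ring α] [LinearOrder α] (a p : ℤ) : Set (Set α) :=
  Set.range (residueIoo α a p)

section ResidueCover

variable {α : Type*} [Ring α] [LinearOrder α] {a b p q k : ℤ} {x : α}

theorem exists_eq_Ioo_of_mem_residueCover [IsStrictOrderedRing α] (hp : 0 < p)
    {I : Set α} (hI : I ∈ residueCover α a p) : ∃ b c : α, b < c ∧ I = Set.Ioo b c := by
  obtain ⟨k, rfl⟩ := hI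
  exact ⟨_, _, Int.cast_lt.mpr (by linarith), rfl⟩

theorem sUnion_residueCover [IsStrictOrderedRing α] [FloorRing α] (hp : 0 < p) :
    ⋃₀ residueCover α a p = Set.univ := by
  refine Set.eq_univ_of_forall fun x => ?_
  let k := (⌈x⌉ - 1 - a) / p
  have left_lt_ceil : a + p * k < ⌈x⌉ := by
    linarith [Int.mul_ediv_self_le (x := ⌈x⌉ - 1 - a) hp.ne']
  have ceil_lt_right : ⌈x⌉ < a + p * (k + 1) + 1 := by
    linarith [Int.lt_mul_ediv_self_add (x := ⌈x⌉ - 1 - a) hp]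
  exact ⟨_, ⟨k, rfl⟩, Int.lt_ceil.mp left_lt_ceil,
    (Int.le_ceil x).trans_lt (Int.cast_lt.mpr ceil_lt_right)⟩

variable [FloorRing α]

theorem floor_mem_Icc_of_mem_residueIoo (hx : x ∈ residueIoo α a p k) :
    ⌊x⌋ ∈ Set.Icc (a + p * k) (a + p * (k + 1)) :=
  ⟨Int.le_floor.mpr hx.1.le, Int.lt_add_one_iff.mp (Int.floor_lt.mpr hx.2)⟩

theorem eq_ediv_or_eq_ediv_sub_one_of_mem_residueIoo (hp : 0 < p)
    (hx : x ∈ residueIoo α a p k) :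
    k = (⌊x⌋ - a) / p ∨ k = (⌊x⌋ - a) / p - 1 ∧ ⌊x⌋ ≡ a [ZMOD p] := by
  obtain ⟨hle, hge⟩ := floor_mem_Icc_of_mem_residueIoo hx
  rcases hge.lt_or_eq with hlt | heq
  · left
    exact ((Int.ediv_eq_iff_of_pos hp).mpr ⟨by linarith, by linarith⟩).symm
  · right
    have hdiff : ⌊x⌋ - a = p * (k + 1) := by rw [heq]; ring
    rw [hdiff, Int.mul_ediv_cancel_left _ hp.ne']
    exact ⟨by ring, (Int.modEq_iff_dvd.mpr ⟨k + 1, hdiff⟩).symm⟩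

theorem encard_residueCover_le_two (hp : 0 < p) (x : α) :
    {I ∈ residueCover α a p | x ∈ I}.encard ≤ 2 := by
  let k := (⌊x⌋ - a) / p
  have hsub : {I ∈ residueCover α a p | x ∈ I} ⊆
      {residueIoo α a p k, residueIoo α a p (k - 1)} := by
    rintro _ ⟨⟨l, rfl⟩, hx⟩
    rcases eq_ediv_or_eq_ediv_sub_one_of_mem_residueIoo hp hx with rfl | ⟨rfl, -⟩
    · exact .inl rfl
    · exact .inr rfl
  calc
    _ ≤ ({residueIoo α a p k, residueIoo α a p (k - 1)} : Set (Set α)).encard :=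
      Set.encard_le_encard hsub
    _ ≤ ({residueIoo α a p (k - 1)} : Set (Set α)).encard + 1 := Set.encard_insert_le _ _
    _ = 2 := by rw [Set.encard_singleton, one_add_one_eq_two]

theorem encard_residueCover_le_one (hp : 0 < p) (hx : ¬ ⌊x⌋ ≡ a [ZMOD p]) :
    {I ∈ residueCover α a p | x ∈ I}.encard ≤ 1 := by
  have eq_ediv {k : ℤ} (hk : x ∈ residueIoo α a p k) : k = (⌊x⌋ - a) / p :=
    (eq_ediv_or_eq_ediv_sub_one_of_mem_residueIoo hp hk).resolve_right fun h => hx h.2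
  rw [Set.encard_le_one_iff]
  rintro _ _ ⟨⟨k, rfl⟩, hk⟩ ⟨⟨l, rfl⟩, hl⟩
  rw [eq_ediv hk, eq_ediv hl]

theorem encard_residueCover_add_encard_residueCover_le_three (hp : 0 < p) (hq : 0 < q)
    (hdisj : ∀ n : ℤ, n ≡ a [ZMOD p] → ¬ n ≡ b [ZMOD q]) (x : α) :
    {I ∈ residueCover α a p | x ∈ I}.encard + {I ∈ residueCover α b q | x ∈ I}.encard ≤ 3 := by
  by_cases ha : ⌊x⌋ ≡ a [ZMOD p]
  · calc
      _ ≤ (2 + 1 : ℕ∞) := add_le_add (encard_residueCover_le_two hp x)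
        (encard_residueCover_le_one hq (hdisj _ ha))
      _ = 3 := by norm_num
  · calc
      _ ≤ (1 + 2 : ℕ∞) := add_le_add (encard_residueCover_le_one hp ha)
        (encard_residueCover_le_two hq x)
      _ = 3 := by norm_num

end ResidueCover

theorem not_modEq_two_pow_of_lt {i j : ℕ} (hij : i < j) {n : ℤ}
    (hj : n ≡ 2 ^ j [ZMOD 2 ^ (j + 1)]) : ¬ n ≡ 2 ^ i [ZMOD 2 ^ (i + 1)] := by
  intro hi
  have hn : (2 : ℤ) ^ (i + 1) ∣ n :=
    (hj.of_dvd (pow_dvd_pow 2 (Nat.succ_le_succ hij.le))).dvd_iff.mpr (pow_dvd_pow 2 hij)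
  have hdvd : (2 : ℤ) ^ (i + 1) ∣ 2 ^ i := hi.dvd_iff.mp hn
  exact i.not_succ_le_self ((pow_dvd_pow_iff two_ne_zero Int.prime_two.not_isUnit).mp hdvd)

theorem not_modEq_two_pow_of_ne {i j : ℕ} (hij : i ≠ j) {n : ℤ}
    (hi : n ≡ 2 ^ i [ZMOD 2 ^ (i + 1)]) : ¬ n ≡ 2 ^ j [ZMOD 2 ^ (j + 1)] := by
  rcases hij.lt_or_gt with hlt | hgt
  · exact fun hj => not_modEq_two_pow_of_lt hlt hj hi
  · exact not_modEq_two_pow_of_lt hgt hi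

theorem interval_covers_small_multiplicity_general (ι α : Type*) [Countable ι] [Ring α]
    [LinearOrder α] [IsStrictOrderedRing α] [FloorRing α] :
    ∃ R : ι → Set (Set α),
      (∀ j, ∀ I ∈ R j, ∃ a b : α, a < b ∧ I = Set.Ioo a b) ∧
      (∀ j, ⋃₀ R j = Set.univ) ∧
      (∀ j, ∀ r : α, ({I ∈ R j | r ∈ I}).encard ≤ 2) ∧
      (∀ i j, i ≠ j → ∀ r : α,
        ({I ∈ R i | r ∈ I}).encard + ({I ∈ R j | r ∈ I}).encard ≤ 3) := by
  obtain ⟨f, hf⟩ := exists_injective_nat ι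
  have hpos (j : ι) : (0 : ℤ) < 2 ^ (f j + 1) := by positivity
  refine ⟨fun j => residueCover α (2 ^ f j) (2 ^ (f j + 1)), ?_, ?_, ?_, ?_⟩
  · exact fun j _ hI => exists_eq_Ioo_of_mem_residueCover (hpos j) hI
  · exact fun j => sUnion_residueCover (hpos j)
  · exact fun j r => encard_residueCover_le_two (hpos j) r
  · exact fun i j hij r => encard_residueCover_add_encard_residueCover_le_three (hpos i) (hpos j)
      (fun _ => not_modEq_two_pow_of_ne (hf.ne hij)) r

/-- **Interval covers with small combined multiplicity.**
For every `m` there are families `R 0, …, R (m-1)` of bounded open intervals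
of `ℝ` such that each family covers `ℝ`, each family has multiplicity at
most `2`, and for `i ≠ j` the disjoint union of the families `R i` and `R j`
has multiplicity at most `3`. -/
theorem interval_covers_small_multiplicity (m : ℕ) :
    ∃ R : Fin m → Set (Set ℝ),
      (∀ j, ∀ I ∈ R j, ∃ a b : ℝ, a < b ∧ I = Set.Ioo a b) ∧
      (∀ j, ⋃₀ R j = Set.univ) ∧
      (∀ j, ∀ r : ℝ, ({I ∈ R j | r ∈ I}).encard ≤ 2) ∧
      (∀ i j, i ≠ j → ∀ r : ℝ,
        ({I ∈ R i | r ∈ I}).encard + ({I ∈ R j | r ∈ I}).encard ≤ 3) :=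
  interval_covers_small_multiplicity_general (Fin m) ℝ
end

section
/- Let X be a set, J a finite index set, k ∈ ℕ, and f : X → ℝ a map. Let (U_j)_{j∈J} be a family of subsets of X such that every x ∈ X lies in U_j for at most k+1 indices j ∈ J. For each j ∈ J let R_j be a family of subsets of ℝ such that every real number belongs to at most 2 members of R_j, and such that for all i ≠ j in J and every r ∈ ℝ the number of members of R_i containing r plus the number of members of R_j containing r is at most 3. Then for every x ∈ X the number of pairs (j, W) with j ∈ J, W ∈ R_j, x ∈ U_j and f(x) ∈ W is at most k+2; that is, the combined family (U_j ∩ f⁻¹(W))_{j∈J, W∈R_j} has multiplicity at most k+2. -/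
/-!
At a point `x`, project the pairs `(j, W)` with `x ∈ U j` and `f x ∈ W` to their index `j`. The
bounds on the families `R j` say that every fiber of this projection has at most two elements, and
that at most one fiber has two. Deleting one element of that exceptional fiber makes the projection
injective, so there is at most one more pair than there are indices `j` with `x ∈ U j`.
-/

section Fibers

variable {α ι : Type*} {s : Set α} {g : α → ι}

theorem injOn_iff_encard_fiber_le_one :
    Set.InjOn g s ↔ ∀ i, (s ∩ g ⁻¹' {i}).encard ≤ 1 := by
  simp only [Set.encard_le_one_iff]
  constructor
  · rintro hg i a b ⟨ha, hai⟩ ⟨hb, hbi⟩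
    exact hg ha hb (hai.trans hbi.symm)
  · intro h a ha b hb hab
    exact h (g b) a b ⟨ha, hab⟩ ⟨hb, rfl⟩

theorem exists_injOn_diff_singleton_of_encard_fiber_le
    (h_two : ∀ i, (s ∩ g ⁻¹' {i}).encard ≤ 2)
    (h_three : ∀ i j, i ≠ j → (s ∩ g ⁻¹' {i}).encard + (s ∩ g ⁻¹' {j}).encard ≤ 3)
    (hg : ¬ Set.InjOn g s) :
    ∃ a ∈ s, Set.InjOn g (s \ {a}) := by
  obtain ⟨i, hi⟩ : ∃ i, 1 < (s ∩ g ⁻¹' {i}).encard := by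
    simpa only [injOn_iff_encard_fiber_le_one, not_forall, not_le] using hg
  obtain ⟨a, ha⟩ : (s ∩ g ⁻¹' {i}).Nonempty :=
    Set.encard_pos.1 (zero_lt_one.trans hi)
  refine ⟨a, ha.1, injOn_iff_encard_fiber_le_one.2 fun j ↦ ?_⟩
  rw [Set.sdiff_inter_right_comm]
  obtain rfl | hij := eq_or_ne i j
  · have h_card : ((s ∩ g ⁻¹' {i}) \ {a}).encard + 1 ≤ 1 + 1 := by
      rw [Set.encard_sdiff_singleton_add_one ha, one_add_one_eq_two]
      exact h_two i
    exact (ENat.add_le_add_iff_right ENat.one_ne_top).1 h_card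
  · have h_card : 2 + (s ∩ g ⁻¹' {j}).encard ≤ 2 + 1 :=
      calc 2 + (s ∩ g ⁻¹' {j}).encard
        _ ≤ (s ∩ g ⁻¹' {i}).encard + (s ∩ g ⁻¹' {j}).encard := by
          gcongr
          simpa only [one_add_one_eq_two] using Order.add_one_le_of_lt hi
        _ ≤ 3 := h_three i j hij
        _ = 2 + 1 := two_add_one_eq_three.symm
    exact (Set.encard_le_encard Set.sdiff_subset).trans
      ((ENat.add_le_add_iff_left (ENat.ofNat_ne_top 2)).1 h_card)

theorem encard_le_encard_image_add_one_of_encard_fiber_le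
    (h_two : ∀ i, (s ∩ g ⁻¹' {i}).encard ≤ 2)
    (h_three : ∀ i j, i ≠ j → (s ∩ g ⁻¹' {i}).encard + (s ∩ g ⁻¹' {j}).encard ≤ 3) :
    s.encard ≤ (g '' s).encard + 1 := by
  by_cases hg : Set.InjOn g s
  · exact hg.encard_image.ge.trans le_self_add
  · obtain ⟨a, ha, hga⟩ := exists_injOn_diff_singleton_of_encard_fiber_le h_two h_three hg
    calc s.encard
      _ = (g '' (s \ {a})).encard + 1 := by
        rw [hga.encard_image, Set.encard_sdiff_singleton_add_one ha]
      _ ≤ (g '' s).encard + 1 := by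
        gcongr
        exact Set.sdiff_subset

end Fibers

theorem encard_inter_fst_preimage_singleton {α β : Type*} (s : Set (α × β)) (a : α) :
    (s ∩ Prod.fst ⁻¹' {a}).encard = (Prod.mk a ⁻¹' s).encard := by
  rw [← (Prod.mk_right_injective a).encard_image (Prod.mk a ⁻¹' s),
    Set.image_preimage_eq_inter_range]
  congr 2
  ext ⟨b, c⟩
  simp [eq_comm]

theorem combined_cover_multiplicity_general
    {X Y J : Type*} (n : ℕ∞) (f : X → Y) (U : J → Set X)
    (hU : ∀ x : X, ({j : J | x ∈ U j}).encard ≤ n)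
    (R : J → Set (Set Y))
    (hR2 : ∀ j : J, ∀ y : Y, ({W ∈ R j | y ∈ W}).encard ≤ 2)
    (hR3 : ∀ i j : J, i ≠ j → ∀ y : Y,
      ({W ∈ R i | y ∈ W}).encard + ({W ∈ R j | y ∈ W}).encard ≤ 3) (x : X) :
    ({p : J × Set Y | p.2 ∈ R p.1 ∧ x ∈ U p.1 ∧ f x ∈ p.2}).encard ≤ n + 1 := by
  set S := {p : J × Set Y | p.2 ∈ R p.1 ∧ x ∈ U p.1 ∧ f x ∈ p.2}
  have h_fiber (j : J) : (S ∩ Prod.fst ⁻¹' {j}).encard ≤ ({W ∈ R j | f x ∈ W}).encard := by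
    rw [encard_inter_fst_preimage_singleton]
    exact Set.encard_le_encard fun W hW ↦ ⟨hW.1, hW.2.2⟩
  have h_image : Prod.fst '' S ⊆ {j | x ∈ U j} :=
    Set.image_subset_iff.2 fun p hp ↦ hp.2.1
  calc S.encard
    _ ≤ (Prod.fst '' S).encard + 1 :=
      encard_le_encard_image_add_one_of_encard_fiber_le
        (fun j ↦ (h_fiber j).trans (hR2 j (f x)))
        (fun i j hij ↦ (add_le_add (h_fiber i) (h_fiber j)).trans (hR3 i j hij (f x)))
    _ ≤ n + 1 := by
      gcongr
      exact (Set.encard_le_encard h_image).trans (hU x)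

/-- **Multiplicity count for the combined covering.**
If `(U j)_{j ∈ J}` (with `J` finite) has multiplicity at most `k+1` on `X`, and
the interval families `R j` each have multiplicity at most `2` with pairwise
combined multiplicity at most `3`, then the combined family
`(U j ∩ f⁻¹ W)_{j ∈ J, W ∈ R j}` has multiplicity at most `k+2`. -/
theorem combined_cover_multiplicity
    {X J : Type*} [Finite J] (k : ℕ) (f : X → ℝ) (U : J → Set X)
    (hU : ∀ x : X, ({j : J | x ∈ U j}).encard ≤ (k : ℕ∞) + 1)
    (R : J → Set (Set ℝ))
    (hR2 : ∀ j : J, ∀ r : ℝ, ({W ∈ R j | r ∈ W}).encard ≤ 2)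
    (hR3 : ∀ i j : J, i ≠ j → ∀ r : ℝ,
      ({W ∈ R i | r ∈ W}).encard + ({W ∈ R j | r ∈ W}).encard ≤ 3) :
    ∀ x : X,
      ({p : J × Set ℝ | p.2 ∈ R p.1 ∧ x ∈ U p.1 ∧ f x ∈ p.2}).encard
        ≤ (k : ℕ∞) + 2 := by
  intro x
  simpa only [add_assoc, one_add_one_eq_two] using
    combined_cover_multiplicity_general (k + 1) f U hU R hR2 hR3 x
end

section
/- Let M and N be metric spaces, K_M ⊆ M and K_N ⊆ N subsets, let A be a bounded metric space, let L ≥ 0, and let σ : A → M × N be an L-Lipschitz map, where M × N carries the sup product metric. Set D = L · diam(A). If the image of σ is disjoint from the product cthickening_D(K_M) × cthickening_D(K_N) of the closed D-thickenings, then either the image of π_M ∘ σ is contained in M ∖ K_M or the image of π_N ∘ σ is contained in N ∖ K_N, where π_M and π_N denote the projections of M × N onto its two factors. -/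
open scoped NNReal

open Metric Set Bornology

section Lipschitz

variable {X Y : Type*} [PseudoMetricSpace X] [PseudoEMetricSpace Y]
  {L : ℝ≥0} {f : X → Y} {s : Set X}

theorem edist_le_ofReal_mul_diam_of_lipschitzOnWith (hf : LipschitzOnWith L f s)
    (hs : IsBounded s) {x y : X} (hx : x ∈ s) (hy : y ∈ s) :
    edist (f x) (f y) ≤ ENNReal.ofReal (L * diam s) :=
  calc edist (f x) (f y) ≤ L * edist x y := hf hx hy
    _ = ENNReal.ofReal (L * dist x y) := by
      rw [edist_dist, ENNReal.ofReal_mul L.coe_nonneg, ENNReal.ofReal_coe_nnreal]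
    _ ≤ ENNReal.ofReal (L * diam s) := by
      gcongr
      exact dist_le_diam_of_mem hs hx hy

theorem mapsTo_cthickening_mul_diam_of_lipschitzOnWith (hf : LipschitzOnWith L f s)
    (hs : IsBounded s) {t : Set Y} {x : X} (hx : x ∈ s) (hfx : f x ∈ t) :
    MapsTo f s (cthickening (L * diam s) t) := fun _ hy =>
  mem_cthickening_of_edist_le _ _ _ t hfx
    (edist_le_ofReal_mul_diam_of_lipschitzOnWith hf hs hy hx)

end Lipschitz

theorem lipschitz_product_projection_alternative_general
    {M N A : Type*} [PseudoEMetricSpace N] [PseudoMetricSpace A] [BoundedSpace A]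
    (K_M : Set M) (K_N : Set N) (L : ℝ≥0) (σ : A → M × N)
    (hσ : LipschitzWith L (Prod.snd ∘ σ))
    (hdisj : Disjoint (range σ) (K_M ×ˢ cthickening (L * diam (univ : Set A)) K_N)) :
    range (Prod.fst ∘ σ) ⊆ K_Mᶜ ∨ range (Prod.snd ∘ σ) ⊆ K_Nᶜ := by
  simp only [range_subset_iff, mem_compl_iff, Function.comp_apply]
  by_contra! ⟨⟨a, ha⟩, ⟨b, hb⟩⟩
  have h_near : (σ a).2 ∈ cthickening (L * diam (univ : Set A)) K_N :=
    mapsTo_cthickening_mul_diam_of_lipschitzOnWith hσ.lipschitzOnWith (.all univ)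
      (mem_univ b) hb (mem_univ a)
  exact disjoint_left.mp hdisj (mem_range_self a) ⟨ha, h_near⟩

/-- **Projection alternative for Lipschitz maps into a product.**
Let `σ : A → M × N` be `L`-Lipschitz on a bounded metric space `A` (the product
carrying the sup metric), and set `D = L · diam A`. If the image of `σ` avoids
`cthickening D K_M ×ˢ cthickening D K_N`, then the image of `π_M ∘ σ` lies in
`M ∖ K_M` or the image of `π_N ∘ σ` lies in `N ∖ K_N`. -/
theorem lipschitz_product_projection_alternative
    {M N A : Type*} [MetricSpace M] [MetricSpace N] [MetricSpace A]
    [BoundedSpace A]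
    (K_M : Set M) (K_N : Set N) (L : ℝ≥0) (σ : A → M × N)
    (hσ : LipschitzWith L σ)
    (hdisj : Disjoint (Set.range σ)
      ((Metric.cthickening ((L : ℝ) * Metric.diam (Set.univ : Set A)) K_M) ×ˢ
       (Metric.cthickening ((L : ℝ) * Metric.diam (Set.univ : Set A)) K_N))) :
    Set.range (Prod.fst ∘ σ) ⊆ K_Mᶜ ∨ Set.range (Prod.snd ∘ σ) ⊆ K_Nᶜ :=
  lipschitz_product_projection_alternative_general K_M K_N L σ
    (by simpa only [one_mul] using LipschitzWith.prod_snd.comp hσ)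
    (hdisj.mono_right (prod_mono_left (self_subset_cthickening K_M)))
end

section
/- Let n ∈ ℕ, L ≥ 0, let f : ℝⁿ → ℝⁿ be an L-Lipschitz map, and let s ⊆ ℝⁿ be a measurable set of finite Lebesgue measure. Then |∫_s det(Df(x)) dx| ≤ Lⁿ · vol(s), where Df(x) denotes the Fréchet derivative of f at x, which exists for almost every x by Rademacher's theorem (on the null set of non-differentiability points the integrand may be taken to be 0). -/
open scoped NNReal

/-!
A linear map of operator norm `‖A‖` sends the unit ball into a ball of radius `‖A‖`, so it scales
volume by at most `‖A‖ ^ dim`; this bounds the Jacobian determinant. If `f` is `L`-Lipschitz only on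
`s`, its derivative within `s` still has norm at most `L` at the Lebesgue density points of `s`,
because every direction is tangent to `s` there.
-/

open MeasureTheory Metric Module

section Determinant

variable {E : Type*} [NormedAddCommGroup E] [NormedSpace ℝ E] [FiniteDimensional ℝ E]

theorem abs_det_le_norm_pow_finrank (A : E →L[ℝ] E) : |A.det| ≤ ‖A‖ ^ finrank ℝ E := by
  borelize E
  let μ : Measure E := Measure.addHaar
  have hball_pos : μ (closedBall 0 1) ≠ 0 := (measure_closedBall_pos μ 0 one_pos).ne'
  have hball_fin : μ (closedBall 0 1) ≠ ⊤ := measure_closedBall_lt_top.ne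
  have himage : A '' closedBall 0 1 ⊆ closedBall 0 ‖A‖ := by
    rintro _ ⟨x, hx, rfl⟩
    exact mem_closedBall_zero_iff.2 (A.unit_le_opNorm x (mem_closedBall_zero_iff.1 hx))
  have hscale : ENNReal.ofReal |A.det| * μ (closedBall 0 1) ≤
      ENNReal.ofReal (‖A‖ ^ finrank ℝ E) * μ (closedBall 0 1) :=
    calc
      ENNReal.ofReal |A.det| * μ (closedBall 0 1) = μ (A '' closedBall 0 1) :=
        (Measure.addHaar_image_continuousLinearMap μ A _).symm
      _ ≤ μ (closedBall 0 ‖A‖) := measure_mono himage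
      _ = ENNReal.ofReal (‖A‖ ^ finrank ℝ E) * μ (closedBall 0 1) :=
        Measure.addHaar_closedBall' μ 0 (norm_nonneg A)
  exact (ENNReal.ofReal_le_ofReal_iff (by positivity)).1
    ((ENNReal.mul_le_mul_iff_left hball_pos hball_fin).1 hscale)

theorem abs_setIntegral_det_le_of_ae_norm_le {X : Type*} [MeasurableSpace X] {μ : Measure X}
    {s : Set X} {A : X → E →L[ℝ] E} {C : ℝ} (hμs : μ s < ⊤)
    (hA : ∀ᵐ x ∂μ.restrict s, ‖A x‖ ≤ C) :
    |∫ x in s, (A x).det ∂μ| ≤ C ^ finrank ℝ E * μ.real s := by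
  refine norm_setIntegral_le_of_norm_le_const_ae (f := fun x => (A x).det) hμs ?_
  filter_upwards [hA] with x hx
  calc
    |(A x).det| ≤ ‖A x‖ ^ finrank ℝ E := abs_det_le_norm_pow_finrank (A x)
    _ ≤ C ^ finrank ℝ E := by gcongr

end Determinant

section Lipschitz

variable {E : Type*} [NormedAddCommGroup E] [NormedSpace ℝ E] [FiniteDimensional ℝ E]
  [MeasurableSpace E] [BorelSpace E] {μ : Measure E} [μ.IsAddHaarMeasure]
  {f : E → E} {f' : E → E →L[ℝ] E} {s : Set E} {L : ℝ≥0}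

theorem ae_norm_le_of_lipschitzOnWith_of_ae_hasFDerivWithinAt (hf : LipschitzOnWith L f s)
    (hs : MeasurableSet s) (hf' : ∀ᵐ x ∂μ.restrict s, HasFDerivWithinAt f (f' x) s x) :
    ∀ᵐ x ∂μ.restrict s, ‖f' x‖ ≤ L := by
  obtain ⟨t, ht_ae, ht, hf't⟩ := hf'.exists_measurable_mem
  have happrox : ApproximatesLinearOn f (0 : E →L[ℝ] E) (t ∩ s) L := fun x hx y hy => by
    simpa using hf.norm_sub_le hx.2 hy.2
  have hbound := happrox.norm_fderiv_sub_le μ (ht.inter hs) f' fun x hx =>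
    (hf't x hx.1).mono Set.inter_subset_right
  rw [← Measure.restrict_restrict ht, Measure.restrict_eq_self_of_ae_mem ht_ae] at hbound
  simpa only [sub_zero, ← NNReal.coe_le_coe, coe_nnnorm] using hbound

theorem abs_integral_det_fderiv_le_general (hf : LipschitzOnWith L f s) (hs : MeasurableSet s)
    (hμs : μ s < ⊤) (hf' : ∀ᵐ x ∂μ.restrict s, HasFDerivWithinAt f (f' x) s x) :
    |∫ x in s, (f' x).det ∂μ| ≤ (L : ℝ) ^ finrank ℝ E * μ.real s :=
  abs_setIntegral_det_le_of_ae_norm_le hμs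
    (ae_norm_le_of_lipschitzOnWith_of_ae_hasFDerivWithinAt hf hs hf')

end Lipschitz

/-- **Jacobian integral estimate for Lipschitz maps.**
If `f : ℝⁿ → ℝⁿ` is `L`-Lipschitz and `s` is a measurable set of finite
Lebesgue measure, then `|∫_s det (Df x) dx| ≤ Lⁿ · vol s`. (At points where
`f` is not differentiable -- a null set by Rademacher's theorem -- `fderiv`
is `0` by convention, so the integrand vanishes there.) -/
theorem abs_integral_det_fderiv_le
    (n : ℕ) (L : ℝ≥0)
    (f : EuclideanSpace ℝ (Fin n) → EuclideanSpace ℝ (Fin n))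
    (hf : LipschitzWith L f)
    (s : Set (EuclideanSpace ℝ (Fin n)))
    (hs : MeasurableSet s) (hvol : MeasureTheory.volume s < ⊤) :
    |∫ x in s, (fderiv ℝ f x).det| ≤ (L : ℝ) ^ n * (MeasureTheory.volume s).toReal := by
  simpa [Measure.real] using abs_integral_det_fderiv_le_general hf.lipschitzOnWith hs hvol <|
    ae_restrict_of_ae <| hf.ae_differentiableAt.mono fun _ hx => hx.hasFDerivAt.hasFDerivWithinAt
end

section
/- Let X be a Hausdorff topological space, k ∈ ℕ, and suppose there exists a continuous proper map f : X → ℝ (preimages of compact sets are compact). Let (U_j)_{j∈J} be a finite open cover of X such that every point of X lies in at most k+1 of the sets U_j. Then X admits an open cover 𝒱 with the following properties: every member of 𝒱 has the form U_j ∩ f⁻¹(W) for some j ∈ J and some bounded open interval W ⊆ ℝ (in particular each member is contained in some U_j and is relatively compact), the family 𝒱 is locally finite, and every point of X lies in at most k+2 members of 𝒱 (counted over the indexing pairs (j, W)). -/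
/-!
Over a bounded part of `ℝ` only finitely many of the `U j` are needed, by properness of `f`, so the
needed indices can be numbered by naturals `i`. For each `i` cut the real line into open pieces of
length slightly above one, overlapping only in the intervals `(n + 1/(i+2), n + 1/(i+1))`, `n ∈ ℤ`.
These overlaps are disjoint for distinct `i`, so the pieces containing a given real number are at
most one per index, except that a single index may contribute two.
-/

open Set

theorem encard_le_encard_add_one_of_injOn_sdiff {α β : Type*} {g : α → β} {s d : Set α} {t : Set β}
    (hmaps : MapsTo g s t) (hd : d.Subsingleton) (hinj : InjOn g (s \ d)) :
    s.encard ≤ t.encard + 1 :=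
  calc s.encard ≤ (s \ d).encard + d.encard := encard_le_encard_sdiff_add_encard s d
    _ ≤ t.encard + 1 := add_le_add
        (encard_le_encard_of_injOn (hmaps.mono_left sdiff_subset) hinj)
        (encard_le_one_iff_subsingleton.2 hd)

theorem locallyFinite_comp_of_finite_fibers {ι κ X : Type*} [TopologicalSpace X] {s : ι → Set X}
    (hs : LocallyFinite s) {g : κ → ι} (hg : ∀ i, (g ⁻¹' {i}).Finite) :
    LocallyFinite (s ∘ g) := fun x => by
  obtain ⟨t, ht, hfin⟩ := hs x
  exact ⟨t, ht, hfin.preimage' fun i _ => hg i⟩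

theorem locallyFinite_Ioo_intCast_add (r : ℝ) :
    LocallyFinite fun n : ℤ => Ioo (n : ℝ) (n + r) := by
  intro t
  refine ⟨Ioo (t - 1) (t + 1), Ioo_mem_nhds (by linarith) (by linarith),
    (finite_Icc ⌊t - 1 - r⌋ ⌈t + 1⌉).subset ?_⟩
  rintro n ⟨s, ⟨hns, hsn⟩, hts, hst⟩
  constructor
  · exact_mod_cast (Int.floor_le (t - 1 - r)).trans (by linarith : t - 1 - r ≤ n)
  · exact_mod_cast (by linarith : (n : ℝ) ≤ t + 1).trans (Int.le_ceil (t + 1))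

/-- The `n`-th piece of the `i`-th cutting of the real line into overlapping bounded open
intervals, with endpoints chosen so that the overlaps are disjoint for distinct `i`. -/
def staggeredInterval (i : ℕ) (n : ℤ) : Set ℝ :=
  Ioo (n + 1 / (i + 2)) (n + 1 + 1 / (i + 1))

namespace staggeredInterval

variable {i j : ℕ} {m n : ℤ} {t : ℝ}

theorem one_div_add_two_lt_one_div_add_one (i : ℕ) : 1 / ((i : ℝ) + 2) < 1 / (i + 1) :=
  one_div_lt_one_div_of_lt (by positivity) (by linarith)

theorem left_lt_right (i : ℕ) (n : ℤ) :
    (n : ℝ) + 1 / (i + 2) < n + 1 + 1 / (i + 1) := by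
  linarith [one_div_add_two_lt_one_div_add_one i]

theorem subset_Ioo (i : ℕ) (n : ℤ) : staggeredInterval i n ⊆ Ioo (n : ℝ) (n + 2) := by
  have hpos : 0 < 1 / ((i : ℝ) + 2) := by positivity
  have hle : 1 / ((i : ℝ) + 1) ≤ 1 := by
    rw [div_le_one (by positivity)]
    linarith [i.cast_nonneg (α := ℝ)]
  exact Ioo_subset_Ioo (by linarith) (by linarith)

theorem exists_mem (i : ℕ) (t : ℝ) : ∃ n, t ∈ staggeredInterval i n := by
  refine ⟨⌈t - 1 / (i + 2)⌉ - 1, ?_, ?_⟩ <;> push_cast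
  · linarith [Int.ceil_lt_add_one (t - 1 / ((i : ℝ) + 2))]
  · linarith [Int.le_ceil (t - 1 / ((i : ℝ) + 2)), one_div_add_two_lt_one_div_add_one i]

theorem eq_add_one (hn : t ∈ staggeredInterval i n) (hm : t ∈ staggeredInterval i m)
    (hnm : n < m) : m = n + 1 := by
  have hlt : (m : ℝ) < n + 2 := (subset_Ioo i m hm).1.trans (subset_Ioo i n hn).2
  have : m < n + 2 := by exact_mod_cast hlt
  omega

theorem overlap_unique
    (hn : t ∈ staggeredInterval i n) (hn' : t ∈ staggeredInterval i (n + 1))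
    (hm : t ∈ staggeredInterval j m) (hm' : t ∈ staggeredInterval j (m + 1)) :
    i = j ∧ n = m := by
  wlog hij : i ≤ j generalizing i j m n
  · exact (this hm hm' hn hn' (not_le.1 hij).le).imp Eq.symm Eq.symm
  have hnm : n = m := by
    have h₁ := (subset_Ioo i _ hn').1.trans (subset_Ioo j m hm).2
    have h₂ := (subset_Ioo j _ hm').1.trans (subset_Ioo i n hn).2
    norm_cast at h₁ h₂
    omega
  subst hnm
  refine ⟨hij.antisymm ?_, rfl⟩
  have hlt : 1 / ((i : ℝ) + 2) < 1 / (j + 1) := by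
    have h₁ := hn'.1
    push_cast at h₁
    linarith [hm.2]
  have : (j : ℝ) + 1 < i + 2 := lt_of_one_div_lt_one_div (by positivity) hlt
  norm_cast at this
  omega

variable {J : Type*} {e : J → ℕ}

theorem encard_index_le {A : Set J} (he : InjOn e A) (t : ℝ) :
    {p : J × ℤ | p.1 ∈ A ∧ t ∈ staggeredInterval (e p.1) p.2}.encard ≤ A.encard + 1 := by
  let d : Set (J × ℤ) := {p | p.1 ∈ A ∧ t ∈ staggeredInterval (e p.1) p.2 ∧
    t ∈ staggeredInterval (e p.1) (p.2 + 1)}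
  refine encard_le_encard_add_one_of_injOn_sdiff (g := Prod.fst) (d := d) (fun p hp => hp.1) ?_ ?_
  · rintro ⟨i, n⟩ ⟨hi, hn, hn'⟩ ⟨j, m⟩ ⟨hj, hm, hm'⟩
    obtain ⟨hij, hnm⟩ := overlap_unique hn hn' hm hm'
    exact Prod.ext (he hi hj hij) hnm
  · rintro ⟨j, n⟩ ⟨⟨hj, hn⟩, hnd⟩ ⟨_, m⟩ ⟨⟨-, hm⟩, hmd⟩ rfl
    rcases lt_trichotomy n m with hnm | rfl | hmn
    · exact absurd ⟨hj, hn, eq_add_one hn hm hnm ▸ hm⟩ hnd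
    · rfl
    · exact absurd ⟨hj, hm, eq_add_one hm hn hmn ▸ hn⟩ hmd

theorem locallyFinite_of_finite {F : ℤ → Set J} (hF : ∀ n, (F n).Finite) (e : J → ℕ) :
    LocallyFinite fun p : {p : J × ℤ // p.1 ∈ F p.2} =>
      staggeredInterval (e p.1.1) p.1.2 := by
  refine (locallyFinite_comp_of_finite_fibers (locallyFinite_Ioo_intCast_add 2)
    (g := fun p : {p : J × ℤ // p.1 ∈ F p.2} => p.1.2) fun n => ?_).subset fun p => subset_Ioo _ _
  refine Finite.of_finite_image (f := fun p => p.1.1) ((hF n).subset ?_) ?_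
  · rintro _ ⟨⟨⟨j, m⟩, hj⟩, rfl, rfl⟩
    exact hj
  · rintro p hp q hq hpq
    exact Subtype.ext (Prod.ext hpq (hp.trans hq.symm))

end staggeredInterval

section ProperMap

variable {X J : Type*} [TopologicalSpace X] {f : X → ℝ}

theorem exists_finite_indices_over_Ioo
    (hproper : ∀ K : Set ℝ, IsCompact K → IsCompact (f ⁻¹' K))
    {U : J → Set X} (hUopen : ∀ j, IsOpen (U j)) (hUcover : ⋃ j, U j = univ) :
    ∃ F : ℤ → Set J, (∀ n, (F n).Finite) ∧
      ∀ x, ∃ j, x ∈ U j ∧ ∀ n : ℤ, f x ∈ Ioo (n : ℝ) (n + 2) → j ∈ F n := by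
  have hslab (n : ℤ) : ∃ G : Finset J, f ⁻¹' Icc (n : ℝ) (n + 1) ⊆ ⋃ j ∈ G, U j :=
    (hproper _ isCompact_Icc).elim_finite_subcover U hUopen (hUcover ▸ subset_univ _)
  choose G hG using hslab
  refine ⟨fun n => G n ∪ G (n + 1),
    fun n => (G n).finite_toSet.union (G (n + 1)).finite_toSet, fun x => ?_⟩
  obtain ⟨j, hj, hx⟩ := mem_iUnion₂.1
    (hG ⌊f x⌋ ⟨Int.floor_le _, (Int.lt_floor_add_one _).le⟩)
  refine ⟨j, hx, fun n hn => ?_⟩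
  have hfloor : ⌊f x⌋ = n ∨ ⌊f x⌋ = n + 1 := by
    have h₁ : n ≤ ⌊f x⌋ := Int.le_floor.2 hn.1.le
    have h₂ : ⌊f x⌋ < n + 2 := Int.floor_lt.2 (by exact_mod_cast hn.2)
    omega
  rcases hfloor with h | h
  · exact Or.inl (h ▸ hj)
  · exact Or.inr (h ▸ hj)

theorem isCompact_closure_inter_preimage_Ioo (hf : Continuous f)
    (hproper : ∀ K : Set ℝ, IsCompact K → IsCompact (f ⁻¹' K)) (s : Set X) (a b : ℝ) :
    IsCompact (closure (s ∩ f ⁻¹' Ioo a b)) :=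
  (hproper _ isCompact_Icc).of_isClosed_subset isClosed_closure <|
    closure_minimal (inter_subset_right.trans (preimage_mono Ioo_subset_Icc_self))
      (isClosed_Icc.preimage hf)

end ProperMap

theorem exists_locally_finite_relatively_compact_refinement_general
    {X J : Type*} [TopologicalSpace X]
    (f : X → ℝ) (hf : Continuous f)
    (hproper : ∀ K : Set ℝ, IsCompact K → IsCompact (f ⁻¹' K))
    (U : J → Set X) (hUopen : ∀ j, IsOpen (U j))
    (hUcover : ⋃ j, U j = univ) :
    ∃ R : J → Set (Set ℝ),
      (∀ j, ∀ W ∈ R j, ∃ a b : ℝ, a < b ∧ W = Ioo a b) ∧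
      (∀ x : X, ∃ j, ∃ W ∈ R j, x ∈ U j ∩ f ⁻¹' W) ∧
      (∀ j, ∀ W ∈ R j, IsOpen (U j ∩ f ⁻¹' W)) ∧
      (∀ j, ∀ W ∈ R j, IsCompact (closure (U j ∩ f ⁻¹' W))) ∧
      (LocallyFinite (fun p : (j : J) × {W : Set ℝ // W ∈ R j} =>
        U p.1 ∩ f ⁻¹' (p.2 : Set ℝ))) ∧
      (∀ x : X,
        ({p : J × Set ℝ | p.2 ∈ R p.1 ∧ x ∈ U p.1 ∩ f ⁻¹' p.2}).encard
          ≤ {j : J | x ∈ U j}.encard + 1) := by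
  obtain ⟨F, hF, hcover⟩ := exists_finite_indices_over_Ioo hproper hUopen hUcover
  obtain ⟨e, he⟩ := countable_iff_exists_injOn.1 (countable_iUnion fun n => (hF n).countable)
  refine ⟨fun j => staggeredInterval (e j) '' {n | j ∈ F n}, ?_, ?_, ?_, ?_, ?_, fun x => ?_⟩
  · rintro j _ ⟨n, -, rfl⟩
    exact ⟨_, _, staggeredInterval.left_lt_right (e j) n, rfl⟩
  · intro x
    obtain ⟨j, hxj, hj⟩ := hcover x
    obtain ⟨n, hn⟩ := staggeredInterval.exists_mem (e j) (f x)
    exact ⟨j, _, ⟨n, hj n (staggeredInterval.subset_Ioo _ _ hn), rfl⟩, hxj, hn⟩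
  · rintro j _ ⟨n, -, rfl⟩
    exact (hUopen j).inter (isOpen_Ioo.preimage hf)
  · rintro j _ ⟨n, -, rfl⟩
    exact isCompact_closure_inter_preimage_Ioo hf hproper _ _ _
  · have hlf := (staggeredInterval.locallyFinite_of_finite hF e).preimage_continuous hf
    refine .of_comp_surjective
      (g := fun p : {p : J × ℤ // p.1 ∈ F p.2} => ⟨p.1.1, _, p.1.2, p.2, rfl⟩) ?_
      (hlf.subset fun p => inter_subset_right)
    rintro ⟨j, _, n, hn, rfl⟩
    exact ⟨⟨(j, n), hn⟩, rfl⟩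
  · let A : Set J := {j | x ∈ U j} ∩ ⋃ n, F n
    let I : Set (J × ℤ) := {p | p.1 ∈ A ∧ f x ∈ staggeredInterval (e p.1) p.2}
    calc _ ≤ ((fun p : J × ℤ => (p.1, staggeredInterval (e p.1) p.2)) '' I).encard := by
          refine encard_le_encard ?_
          rintro ⟨j, W⟩ ⟨⟨n, hn, hW⟩, hxj, hfx⟩
          exact ⟨(j, n), ⟨⟨hxj, mem_iUnion.2 ⟨n, hn⟩⟩, hW.symm ▸ hfx⟩, Prod.ext rfl hW⟩
      _ ≤ I.encard := encard_image_le _ _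
      _ ≤ A.encard + 1 := staggeredInterval.encard_index_le (he.mono inter_subset_right) _
      _ ≤ {j | x ∈ U j}.encard + 1 := by gcongr; exact inter_subset_left

/-- **Construction of locally finite relatively compact refinements of small
multiplicity.** Let `X` be Hausdorff with a continuous proper map `f : X → ℝ`,
and let `(U j)_{j ∈ J}` be a finite open cover of multiplicity at most `k+1`.
Then there are families `R j` of bounded open intervals such that the sets
`U j ∩ f⁻¹ W` (for `j ∈ J`, `W ∈ R j`) form an open cover of `X` by relatively
compact sets, the family is locally finite, and every point lies in at most
`k+2` members (counted over the indexing pairs `(j, W)`). -/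
theorem exists_locally_finite_relatively_compact_refinement
    {X J : Type*} [TopologicalSpace X] [T2Space X] [Finite J] (k : ℕ)
    (f : X → ℝ) (hf : Continuous f)
    (hproper : ∀ K : Set ℝ, IsCompact K → IsCompact (f ⁻¹' K))
    (U : J → Set X) (hUopen : ∀ j, IsOpen (U j))
    (hUcover : ⋃ j, U j = Set.univ)
    (hUmult : ∀ x : X, ({j : J | x ∈ U j}).encard ≤ (k : ℕ∞) + 1) :
    ∃ R : J → Set (Set ℝ),
      (∀ j, ∀ W ∈ R j, ∃ a b : ℝ, a < b ∧ W = Set.Ioo a b) ∧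
      (∀ x : X, ∃ j, ∃ W ∈ R j, x ∈ U j ∩ f ⁻¹' W) ∧
      (∀ j, ∀ W ∈ R j, IsOpen (U j ∩ f ⁻¹' W)) ∧
      (∀ j, ∀ W ∈ R j, IsCompact (closure (U j ∩ f ⁻¹' W))) ∧
      (LocallyFinite (fun p : (j : J) × {W : Set ℝ // W ∈ R j} =>
        U p.1 ∩ f ⁻¹' (p.2 : Set ℝ))) ∧
      (∀ x : X,
        ({p : J × Set ℝ | p.2 ∈ R p.1 ∧ x ∈ U p.1 ∩ f ⁻¹' p.2}).encard
          ≤ (k : ℕ∞) + 2) := by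
  obtain ⟨R, hIoo, hcover, hopen, hcompact, hfinite, hmult⟩ :=
    exists_locally_finite_relatively_compact_refinement_general f hf hproper U hUopen hUcover
  refine ⟨R, hIoo, hcover, hopen, hcompact, hfinite, fun x => (hmult x).trans ?_⟩
  simpa only [add_assoc, one_add_one_eq_two] using add_le_add_left (hUmult x) 1
end
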